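/- Let f be an almost permutation of ℕ. Then α_f satisfies property (*) if and only if Index(f) is even. -/

import Mathlib

open Set Filter


/-- An almost permutation of `ℕ`: a bijection between a cofinite subset `dom`
of `ℕ` and a cofinite subset (its range) of `ℕ`.  The function `toFun` carries
arbitrary (junk) values outside of `dom`. -/
structure AlmostPerm where
  dom : Set ℕ
  toFun : ℕ → ℕ
  cofinite_dom : domᶜ.Finite
  injOn : Set.InjOn toFun dom
  cofinite_ran : (toFun '' dom)ᶜ.Finite

namespace AlmostPerm

/-- The range of an almost permutation. -/
def ran (f : AlmostPerm) : Set ℕ := f.toFun '' f.dom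

/-- The image `f[A]` of a set under an almost permutation. -/
def image (f : AlmostPerm) (A : Set ℕ) : Set ℕ := f.toFun '' (A ∩ f.dom)

/-- The (prodigal) index `|ℕ \ dom f| − |ℕ \ ran f|`. -/
noncomputable def index (f : AlmostPerm) : ℤ :=
  (Nat.card ↥(f.domᶜ) : ℤ) - (Nat.card ↥(f.ranᶜ) : ℤ)

/-- The one-step relation: `b = f(a)`. -/
def step (f : AlmostPerm) (a b : ℕ) : Prop := a ∈ f.dom ∧ f.toFun a = b

/-- The orbit `O_f(n) = {f^k(n) : k ∈ ℤ, f^k(n) defined}`. -/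
def orbit (f : AlmostPerm) (n : ℕ) : Set ℕ :=
  {m | Relation.ReflTransGen f.step n m ∨ Relation.ReflTransGen f.step m n}

end AlmostPerm


/-- The Boolean algebra `P(ℕ)/Fin`, realized as germs of `ℕ → Prop` over the
cofinite filter on `ℕ`. -/
abbrev PFin : Type := Filter.Germ (Filter.cofinite : Filter ℕ) Prop

/-- The class `[A]` of a set `A ⊆ ℕ` in `P(ℕ)/Fin`. -/
def pfinMk (A : Set ℕ) : PFin := Filter.Germ.ofFun (fun n => n ∈ A)


/-- `c` is a component of the automorphism `α` of `P(ℕ)/Fin`: an atom of the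
subalgebra of fixed points of `α`. -/
def IsComponent (α : PFin → PFin) (c : PFin) : Prop :=
  α c = c ∧ c ≠ ⊥ ∧ ∀ x : PFin, ⊥ < x → x < c → α x ≠ x


/-- Property (*) of an automorphism `α` of `P(ℕ)/Fin`: there is a partition
`P` of the set of components of `α` into pairs such that for every set `A` of
pairs there is an `α`-fixed `d` lying above all components appearing in `A`
and disjoint from all other components. -/
def PropertyStar (α : PFin → PFin) : Prop :=
  ∃ P : Set (PFin × PFin),
    (∀ p ∈ P, IsComponent α p.1 ∧ IsComponent α p.2 ∧ p.1 ≠ p.2) ∧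
    (∀ c : PFin, IsComponent α c → ∃ p ∈ P, c = p.1 ∨ c = p.2) ∧
    (∀ p ∈ P, ∀ q ∈ P, p ≠ q → p.1 ≠ q.1 ∧ p.1 ≠ q.2 ∧ p.2 ≠ q.1 ∧ p.2 ≠ q.2) ∧
    ∀ A ⊆ P, ∃ d : PFin,
      (∀ p ∈ A, p.1 ≤ d ∧ p.2 ≤ d) ∧
      (∀ c : PFin, IsComponent α c → (∀ p ∈ A, c ≠ p.1 ∧ c ≠ p.2) → c ⊓ d = ⊥) ∧
      α d = d


theorem pf_surj (c : PFin) : ∃ A : Set ℕ, c = pfinMk A := by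
  induction c using Filter.Germ.inductionOn with
  | _ g => exact ⟨{n | g n}, rfl⟩

theorem pf_le {A B : Set ℕ} : pfinMk A ≤ pfinMk B ↔ (A \ B).Finite := by
  unfold pfinMk
  rw [Filter.Germ.coe_le, Filter.EventuallyLE, Filter.eventually_cofinite]
  have : {x | ¬ ((x ∈ A) ≤ (x ∈ B))} = A \ B := by
    ext x; simp
  rw [this]

theorem pf_eq {A B : Set ℕ} : pfinMk A = pfinMk B ↔ (A \ B).Finite ∧ (B \ A).Finite := by
  rw [le_antisymm_iff, pf_le, pf_le]

theorem pf_bot : (⊥ : PFin) = pfinMk ∅ := rfl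

theorem pf_inf {A B : Set ℕ} : pfinMk A ⊓ pfinMk B = pfinMk (A ∩ B) := rfl

theorem pf_eq_bot {A : Set ℕ} : pfinMk A = ⊥ ↔ A.Finite := by
  rw [pf_bot, pf_eq]; simp

/-- crossing set -/
def Cr (h : ℕ → ℕ) (A : Set ℕ) : Set ℕ := {x | ¬ (x ∈ A ↔ h x ∈ A)}

theorem star_iff {E : Type} (α : PFin → PFin) (c : E → PFin) (hc : Function.Injective c)
    (h1 : ∀ e, IsComponent α (c e)) (h2 : ∀ x, IsComponent α x → ∃ e, x = c e) :
    PropertyStar α ↔ ∃ σ : E → E, (∀ e, σ (σ e) = e) ∧ (∀ e, σ e ≠ e) ∧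
      ∀ A : Set E, (∀ e ∈ A, σ e ∈ A) → ∃ d : PFin, (∀ e ∈ A, c e ≤ d) ∧
        (∀ e, e ∉ A → c e ⊓ d = ⊥) ∧ α d = d := by
  constructor
  · rintro ⟨P, hP1, hP2, hP3, hP4⟩
    have ex : ∀ e, ∃ e', (c e, c e') ∈ P ∨ (c e', c e) ∈ P := by
      intro e
      obtain ⟨⟨a, b⟩, hp, hab⟩ := hP2 (c e) (h1 e)
      obtain ⟨ea, hea⟩ := h2 a (hP1 _ hp).1
      obtain ⟨eb, heb⟩ := h2 b (hP1 _ hp).2.1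
      subst hea heb
      rcases hab with hab | hab
      · exact ⟨eb, Or.inl (by rw [hab]; exact hp)⟩
      · exact ⟨ea, Or.inr (by rw [hab]; exact hp)⟩
    have un : ∀ e a b, ((c e, c a) ∈ P ∨ (c a, c e) ∈ P) → ((c e, c b) ∈ P ∨ (c b, c e) ∈ P) →
        a = b := by
      intro e a b ha hb
      apply hc
      rcases ha with ha | ha <;> rcases hb with hb | hb
      · by_contra hne
        exact (hP3 _ ha _ hb (by simpa using hne)).1 rfl
      · by_cases heq : ((c e, c a) : PFin × PFin) = (c b, c e)
        · exact absurd (Prod.ext_iff.1 heq).2.symm (hP1 _ ha).2.2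
        · exact absurd rfl (hP3 _ ha _ hb heq).2.1
      · by_cases heq : ((c a, c e) : PFin × PFin) = (c e, c b)
        · exact absurd (Prod.ext_iff.1 heq).1 (hP1 _ ha).2.2
        · exact absurd rfl (hP3 _ ha _ hb heq).2.2.1
      · by_contra hne
        exact (hP3 _ ha _ hb (by simpa using hne)).2.2.2 rfl
    choose σ hσ using ex
    refine ⟨σ, fun e => un (σ e) _ _ (hσ _) (hσ e).symm, ?_, ?_⟩
    · intro e he
      have := hσ e
      rw [he] at this
      rcases this with h | h <;> exact (hP1 _ h).2.2 rfl
    · intro A hA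
      have key : ∀ p ∈ P, (∃ e ∈ A, c e = p.1 ∨ c e = p.2) → ∃ a ∈ A, ∃ b ∈ A, p = (c a, c b) := by
        rintro ⟨x, y⟩ hp ⟨e, he, hxy⟩
        obtain ⟨a, rfl⟩ := h2 x (hP1 _ hp).1
        obtain ⟨b, rfl⟩ := h2 y (hP1 _ hp).2.1
        rcases hxy with hxy | hxy
        · have := hc hxy
          subst this
          refine ⟨e, he, b, ?_, rfl⟩
          rw [un e b (σ e) (Or.inl hp) (hσ e)]
          exact hA e he
        · have := hc hxy
          subst this
          refine ⟨a, ?_, e, he, rfl⟩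
          rw [un e a (σ e) (Or.inr hp) (hσ e)]
          exact hA e he
      obtain ⟨d, hd1, hd2, hd3⟩ := hP4 {p ∈ P | ∃ e ∈ A, c e = p.1 ∨ c e = p.2} (fun p hp => hp.1)
      refine ⟨d, ?_, ?_, hd3⟩
      · intro e he
        rcases hσ e with h | h
        · exact (hd1 _ ⟨h, e, he, Or.inl rfl⟩).1
        · exact (hd1 _ ⟨h, e, he, Or.inr rfl⟩).2
      · intro e he
        apply hd2 _ (h1 e)
        rintro p ⟨hp, hp'⟩
        obtain ⟨a, ha, b, hb, rfl⟩ := key p hp hp'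
        exact ⟨fun h => he (hc h ▸ ha), fun h => he (hc h ▸ hb)⟩
  · rintro ⟨σ, hσ, hσ', hd⟩
    let _ : LinearOrder E := by
      classical
      exact linearOrderOfSTO (WellOrderingRel (α := E))
    refine ⟨{p | ∃ e, e < σ e ∧ p = (c e, c (σ e))}, ?_, ?_, ?_, ?_⟩
    · rintro p ⟨e, he, rfl⟩
      exact ⟨h1 _, h1 _, fun h => hσ' e (hc h).symm⟩
    · intro x hx
      obtain ⟨e, rfl⟩ := h2 x hx
      rcases lt_or_gt_of_ne (hσ' e) with h | h
      · exact ⟨_, ⟨σ e, by rwa [hσ], rfl⟩, Or.inr (by simp [hσ])⟩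
      · exact ⟨_, ⟨e, h, rfl⟩, Or.inl rfl⟩
    · rintro p ⟨e, he, rfl⟩ q ⟨e', he', rfl⟩ hne
      have hee : e ≠ e' := by rintro rfl; exact hne rfl
      refine ⟨fun h => hee (hc h), fun h => ?_, fun h => ?_, fun h => ?_⟩
      · have := hc h
        subst this
        rw [hσ] at he
        exact lt_asymm he he'
      · have := hc h
        subst this
        rw [hσ] at he'
        exact lt_asymm he he'
      · have := congrArg σ (hc h)
        rw [hσ, hσ] at this
        exact hee this
    · intro A hA
      obtain ⟨d, hd1, hd2, hd3⟩ := hd {e | ∃ p ∈ A, c e = p.1 ∨ c e = p.2} (by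
        rintro e ⟨p, hp, h⟩
        obtain ⟨a, ha, rfl⟩ := hA hp
        refine ⟨_, hp, ?_⟩
        rcases h with h | h
        · right; rw [hc h]
        · left; rw [hc h, hσ])
      refine ⟨d, ?_, ?_, hd3⟩
      · intro p hp
        obtain ⟨a, ha, rfl⟩ := hA hp
        exact ⟨hd1 _ ⟨_, hp, Or.inl rfl⟩, hd1 _ ⟨_, hp, Or.inr rfl⟩⟩
      · intro x hx hxA
        obtain ⟨e, rfl⟩ := h2 x hx
        apply hd2
        rintro ⟨p, hp, h⟩
        rcases h with h | h
        · exact (hxA p hp).1 h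
        · exact (hxA p hp).2 h

/-- combinatorial lemma -/
theorem comb {E : Type} (σ τ : E → E) (hσ : ∀ e, σ (σ e) = e) (hτ : ∀ e, τ (τ e) = e)
    (hfix : {e | τ e = e}.Finite)
    (hA : ∀ A : Set E, (∀ e ∈ A, σ e ∈ A) → {e | e ∈ A ∧ τ e ∉ A}.Finite) :
    {e | σ e ≠ τ e}.Finite := by
  classical
  by_contra hinf
  have hinf : ({e | σ e ≠ τ e} \ {e | τ e = e}).Infinite := Set.Infinite.sdiff hinf hfix
  obtain ⟨g, hg1, hg2⟩ := exists_seq_of_forall_finset_exists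
    (fun e => σ e ≠ τ e ∧ τ e ≠ e)
    (fun a b => b ≠ a ∧ b ≠ τ a ∧ b ≠ σ (τ a) ∧ b ≠ τ (σ a)) (by
      intro s hs
      have := hinf.sdiff (s ∪ s.image τ ∪ s.image (fun a => σ (τ a)) ∪
        s.image (fun a => τ (σ a))).finite_toSet
      obtain ⟨b, hb, hb'⟩ := this.nonempty
      refine ⟨b, hb, fun a ha => ?_⟩
      simp only [Finset.coe_union, Finset.coe_image, Set.mem_union, not_or, Set.mem_image,
        Finset.mem_coe, not_exists, not_and] at hb'
      obtain ⟨⟨⟨h1, h2⟩, h3⟩, h4⟩ := hb'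
      exact ⟨fun h => h1 (h ▸ ha), fun h => h2 a ha h.symm, fun h => h3 a ha h.symm,
        fun h => h4 a ha h.symm⟩)
  have hfin := hA {e | ∃ i, e = g i ∨ e = σ (g i)} (by
    rintro e ⟨i, rfl | rfl⟩
    · exact ⟨i, Or.inr rfl⟩
    · exact ⟨i, Or.inl (hσ _)⟩)
  have hginj : Function.Injective g := by
    intro i j hij
    by_contra hne
    rcases lt_or_gt_of_ne hne with h | h
    · exact (hg2 _ _ h).1 hij.symm
    · exact (hg2 _ _ h).1 hij
  refine Set.infinite_range_of_injective hginj (hfin.subset ?_)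
  rintro _ ⟨i, rfl⟩
  refine ⟨⟨i, Or.inl rfl⟩, ?_⟩
  rintro ⟨j, h | h⟩
  · rcases lt_trichotomy i j with hij | hij | hij
    · exact (hg2 _ _ hij).2.1 h.symm
    · subst hij; exact (hg1 i).2 h
    · exact (hg2 _ _ hij).2.1 (by rw [← h, hτ])
  · rcases lt_trichotomy i j with hij | hij | hij
    · exact (hg2 _ _ hij).2.2.1 (by rw [h, hσ])
    · subst hij; exact (hg1 i).1 h.symm
    · exact (hg2 _ _ hij).2.2.2 (by rw [← h, hτ])

theorem inv_card {E : Type} [Fintype E] [DecidableEq E] (σ : E → E) (hσ : ∀ e, σ (σ e) = e) :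
    Fintype.card E ≡ Nat.card {e // σ e = e} [MOD 2] := by
  have := Equiv.Perm.card_fixedPoints_modEq (f := σ) (p := 2) (n := 1) (by
    funext e; exact hσ e)
  convert this using 1
  rw [Nat.card_eq_fintype_card]
  rfl

theorem comb2 {E : Type} (σ τ : E → E) (hσ : ∀ e, σ (σ e) = e) (hτ : ∀ e, τ (τ e) = e)
    (hσ' : ∀ e, σ e ≠ e) (hK : {e | σ e ≠ τ e}.Finite) : Even (Nat.card {e // τ e = e}) := by
  classical
  let K := {e | σ e ≠ τ e}
  have : Fintype K := hK.fintype
  have s1 : ∀ e : K, σ e ∈ K := by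
    rintro ⟨e, he⟩ h
    apply he
    simp only [hσ] at h
    have := congrArg τ h
    rw [hτ] at this
    exact this.symm
  have s2 : ∀ e : K, τ e ∈ K := by
    rintro ⟨e, he⟩ h
    apply he
    simp only [hτ] at h
    have := congrArg σ h
    rw [hσ] at this
    exact this.symm
  have c1 := inv_card (E := K) (fun e => ⟨σ e, s1 e⟩) (fun e => Subtype.ext (hσ e))
  have c2 := inv_card (E := K) (fun e => ⟨τ e, s2 e⟩) (fun e => Subtype.ext (hτ e))
  have e1 : Nat.card {e : K // (⟨σ e, s1 e⟩ : K) = e} = 0 := by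
    have : IsEmpty {e : K // (⟨σ e, s1 e⟩ : K) = e} :=
      ⟨fun e => hσ' e.1.1 (congrArg Subtype.val e.2)⟩
    exact Nat.card_of_isEmpty
  have e2 : Nat.card {e : K // (⟨τ e, s2 e⟩ : K) = e} = Nat.card {e // τ e = e} := by
    refine Nat.card_congr ⟨fun e => ⟨e.1.1, congrArg Subtype.val e.2⟩,
      fun e => ⟨⟨e.1, fun h => hσ' e.1 (h.trans e.2)⟩, Subtype.ext e.2⟩, fun _ => rfl, fun _ => rfl⟩
  rw [e1] at c1
  rw [e2] at c2
  rw [Nat.even_iff]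
  exact (c2.symm.trans c1)

theorem rho_exists (h : ℕ → ℕ) (hinj : Function.Injective h) :
    ∃ ρ : ℕ → ℕ, (∀ x, ρ (h x) = ρ x) ∧ (∀ x, x ∉ range h → ρ x = x) ∧ (∀ x, ρ (ρ x) = ρ x) ∧
      (∀ x y, ρ x = ρ y → ∃ m n, h^[m] x = h^[n] y) := by
  let R : ℕ → ℕ → Prop := fun x y => ∃ m n, h^[m] x = h^[n] y
  have Rrefl : ∀ x, R x x := fun x => ⟨0, 0, rfl⟩
  have Rsymm : ∀ x y, R x y → R y x := fun x y ⟨m, n, e⟩ => ⟨n, m, e.symm⟩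
  have Rtrans : ∀ x y z, R x y → R y z → R x z := by
    rintro x y z ⟨m, n, e⟩ ⟨m', n', e'⟩
    refine ⟨m' + m, n + n', ?_⟩
    rw [Function.iterate_add_apply, e, ← Function.iterate_add_apply, add_comm,
      Function.iterate_add_apply, e', ← Function.iterate_add_apply]
  let P : ℕ → ℕ → Prop := fun x y => R y x ∧ ((∃ r, r ∉ range h ∧ R r x) → y ∉ range h)
  have Pex : ∀ x, ∃ y, P x y := by
    intro x
    by_cases hx : ∃ r, r ∉ range h ∧ R r x
    · obtain ⟨r, hr, hrx⟩ := hx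
      exact ⟨r, hrx, fun _ => hr⟩
    · exact ⟨x, Rrefl x, fun h => absurd h hx⟩
  have Peq : ∀ x x', R x x' → P x = P x' := by
    intro x x' hx
    have : ∀ y, R y x ↔ R y x' := fun y =>
      ⟨fun h => Rtrans _ _ _ h hx, fun h => Rtrans _ _ _ h (Rsymm _ _ hx)⟩
    funext y
    simp only [P, this]
  let ρ : ℕ → ℕ := fun x => Classical.epsilon (P x)
  have hρ : ∀ x, P x (ρ x) := fun x => Classical.epsilon_spec (Pex x)
  have hρe : ∀ x x', R x x' → ρ x = ρ x' := fun x x' hx => by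
    simp only [ρ, Peq x x' hx]
  refine ⟨ρ, fun x => hρe _ _ ⟨0, 1, rfl⟩, ?_, fun x => hρe _ _ (hρ x).1, ?_⟩
  · intro x hx
    have h1 := (hρ x).2 ⟨x, hx, Rrefl x⟩
    obtain ⟨m, n, e⟩ := (hρ x).1
    rcases lt_trichotomy m n with hmn | hmn | hmn
    · obtain ⟨k, rfl⟩ := Nat.exists_eq_add_of_lt hmn
      rw [add_assoc, Function.iterate_add_apply] at e
      have := hinj.iterate m e
      rw [Function.iterate_succ_apply'] at this
      exact absurd ⟨_, this.symm⟩ h1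
    · subst hmn
      exact hinj.iterate m e
    · obtain ⟨k, rfl⟩ := Nat.exists_eq_add_of_lt hmn
      rw [add_assoc, Function.iterate_add_apply] at e
      have := hinj.iterate n e
      rw [Function.iterate_succ_apply'] at this
      exact absurd ⟨_, this⟩ hx
  · intro x y hxy
    have := (hρ y).1
    rw [← hxy] at this
    exact Rtrans _ _ _ (Rsymm _ _ (hρ x).1) this

def IsRay (h s : ℕ → ℕ) : Prop := (∀ k, s (k+1) = h (s k)) ∨ (∀ k, h (s (k+1)) = s k)

theorem ray_fixed {h s : ℕ → ℕ} (hinj : Function.Injective h) (hr : IsRay h s) :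
    (Cr h (range s)).Finite := by
  rcases hr with hr | hr
  · have : (h ⁻¹' {s 0}).Finite := (Set.finite_singleton _).preimage hinj.injOn
    refine this.subset ?_
    intro x hx
    by_contra hne
    apply hx
    constructor
    · rintro ⟨k, rfl⟩
      exact ⟨k+1, hr k⟩
    · rintro ⟨k, hk⟩
      rcases k with _ | k
      · exact absurd hk.symm hne
      · rw [hr] at hk
        exact ⟨k, hinj hk⟩
  · refine (Set.finite_singleton (s 0)).subset ?_
    intro x hx
    by_contra hne
    apply hx
    constructor
    · rintro ⟨k, rfl⟩
      rcases k with _ | k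
      · exact absurd rfl hne
      · exact ⟨k, (hr k).symm⟩
    · rintro ⟨k, hk⟩
      rw [← hr] at hk
      exact ⟨k+1, hinj hk⟩

theorem ray_dich {h s : ℕ → ℕ} (hs : Function.Injective s) (hr : IsRay h s) {D : Set ℕ}
    (hD : (Cr h D).Finite) : (range s \ D).Finite ∨ (range s ∩ D).Finite := by
  have hfin : {k | ¬ (s k ∈ D ↔ s (k+1) ∈ D)}.Finite := by
    rcases hr with hr | hr
    · refine (hD.preimage hs.injOn).subset ?_
      intro k hk
      simpa [Cr, hr] using hk
    · refine (hD.preimage (f := fun k => s (k+1)) (fun a _ b _ hab => by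
        have := hs hab; omega)).subset ?_
      intro k hk hk'
      apply hk
      rw [← hr k]
      exact hk'.symm
  obtain ⟨N, hN⟩ := hfin.bddAbove
  have h1 : ∀ k, s (N + 1 + k) ∈ D ↔ s (N + 1) ∈ D := by
    intro k
    induction k with
    | zero => rfl
    | succ k ih =>
      rw [← ih]
      by_contra hc
      have : N + 1 + k ≤ N := hN (fun h => hc h.symm)
      omega
  have h2 : (s '' {k | k < N + 1}).Finite := (Set.finite_lt_nat _).image _
  by_cases hm : s (N+1) ∈ D
  · left
    refine h2.subset ?_
    rintro _ ⟨⟨k, rfl⟩, hk⟩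
    refine ⟨k, ?_, rfl⟩
    by_contra hlt
    obtain ⟨j, rfl⟩ := Nat.exists_eq_add_of_le (not_lt.1 hlt)
    exact hk ((h1 j).2 hm)
  · right
    refine h2.subset ?_
    rintro _ ⟨⟨k, rfl⟩, hk⟩
    refine ⟨k, ?_, rfl⟩
    by_contra hlt
    obtain ⟨j, rfl⟩ := Nat.exists_eq_add_of_le (not_lt.1 hlt)
    exact hm ((h1 j).1 hk)

theorem ray_component {h s : ℕ → ℕ} (hinj : Function.Injective h) (hs : Function.Injective s)
    (hr : IsRay h s) {α : PFin → PFin}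
    (hα : ∀ A, α (pfinMk A) = pfinMk A ↔ (Cr h A).Finite) :
    IsComponent α (pfinMk (range s)) := by
  refine ⟨(hα _).2 (ray_fixed hinj hr), ?_, ?_⟩
  · rw [Ne, pf_eq_bot]
    exact Set.infinite_range_of_injective hs
  · intro x hx0 hx1 hx
    obtain ⟨D, rfl⟩ := pf_surj x
    rw [hα] at hx
    rcases ray_dich hs hr hx with h' | h'
    · exact hx1.not_ge (pf_le.2 h')
    · apply hx0.ne'
      have := pf_le.1 hx1.le
      rw [pf_eq_bot]
      refine (this.union h').subset ?_
      intro y hy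
      by_cases hys : y ∈ range s
      · exact Or.inr ⟨hys, hy⟩
      · exact Or.inl ⟨hy, hys⟩

theorem split_infinite {U : Set ℕ} (hU : U.Infinite) :
    ∃ V ⊆ U, V.Infinite ∧ (U \ V).Infinite := by
  have := hU.to_subtype
  let e := hU.natEmbedding
  have he : Function.Injective (fun n => (e n : ℕ)) := fun a b hab => e.injective (Subtype.ext hab)
  refine ⟨range (fun n => (e (2 * n) : ℕ)), ?_, ?_, ?_⟩
  · rintro _ ⟨n, rfl⟩
    exact (e (2*n)).2
  · exact Set.infinite_range_of_injective (fun a b hab => by have := he hab; omega)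
  · have : (range (fun n => (e (2 * n + 1) : ℕ))).Infinite :=
      Set.infinite_range_of_injective (fun a b hab => by have := he hab; omega)
    refine this.mono ?_
    rintro _ ⟨n, rfl⟩
    refine ⟨(e (2*n+1)).2, ?_⟩
    rintro ⟨m, hm⟩
    have := he hm
    omega

theorem comp_finite {h ρ : ℕ → ℕ} (hρ : ∀ x, ρ (h x) = ρ x) {α : PFin → PFin}
    (hα : ∀ A, α (pfinMk A) = pfinMk A ↔ (Cr h A).Finite) {D : Set ℕ}
    (hD : IsComponent α (pfinMk D)) : (ρ '' D).Finite := by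
  by_contra hinf
  obtain ⟨V, hVU, hV, hV'⟩ := split_infinite hinf
  have hDD : (D ∩ ρ ⁻¹' V).Infinite := by
    refine Set.Infinite.of_image ρ (hV.mono ?_)
    intro v hv
    obtain ⟨x, hx, rfl⟩ := hVU hv
    exact ⟨x, ⟨hx, hv⟩, rfl⟩
  have hDD' : (D \ (D ∩ ρ ⁻¹' V)).Infinite := by
    refine Set.Infinite.of_image ρ (hV'.mono ?_)
    rintro v ⟨⟨x, hx, rfl⟩, hv⟩
    exact ⟨x, ⟨hx, fun h => hv h.2⟩, rfl⟩
  refine hD.2.2 (pfinMk (D ∩ ρ ⁻¹' V)) ?_ ?_ ?_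
  · rw [bot_lt_iff_ne_bot, Ne, pf_eq_bot]
    exact hDD
  · refine lt_of_le_not_ge (pf_le.2 ?_) (fun hle => hDD' (pf_le.1 hle))
    have : (D ∩ ρ ⁻¹' V) \ D = ∅ := by ext; simp; tauto
    rw [this]; exact Set.finite_empty
  · rw [hα]
    refine ((hα D).1 hD.1).subset ?_
    intro x hx hx'
    apply hx
    simp only [Set.mem_inter_iff, Set.mem_preimage, hρ, hx']

section dyn

variable {h ρ : ℕ → ℕ}

abbrev EE (h ρ : ℕ → ℕ) : Type :=
  {e : ℕ × Bool // ρ e.1 = e.1 ∧ e.1 ∉ Function.periodicPts h ∧ (e.2 = false → e.1 ∈ range h)}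

noncomputable def SS (h : ℕ → ℕ) (e : ℕ × Bool) (k : ℕ) : ℕ :=
  if e.2 then h^[k] e.1 else (Function.invFun h)^[k+1] e.1

theorem np {t i j : ℕ} (hinj : Function.Injective h) (ht : t ∉ Function.periodicPts h)
    (hij : h^[i] t = h^[j] t) : i = j := by
  by_contra hne
  apply ht
  rcases lt_or_gt_of_ne hne with hlt | hlt
  · obtain ⟨k, rfl⟩ := Nat.exists_eq_add_of_lt hlt
    rw [add_assoc, Function.iterate_add_apply] at hij
    exact Function.mk_mem_periodicPts (Nat.succ_pos k) (hinj.iterate _ hij).symm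
  · obtain ⟨k, rfl⟩ := Nat.exists_eq_add_of_lt hlt
    rw [add_assoc, Function.iterate_add_apply] at hij
    exact Function.mk_mem_periodicPts (Nat.succ_pos k) (hinj.iterate _ hij)

theorem rho_iter (hρ : ∀ x, ρ (h x) = ρ x) (k x : ℕ) : ρ (h^[k] x) = ρ x := by
  induction k with
  | zero => rfl
  | succ k ih => rw [Function.iterate_succ_apply', hρ, ih]

theorem back (hρ : ∀ x, ρ (h x) = ρ x) (hρ2 : ∀ x, x ∉ range h → ρ x = x) {t : ℕ} (ht : ρ t = t)
    (htr : t ∈ range h) (k : ℕ) : ρ ((Function.invFun h)^[k] t) = t ∧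
      (Function.invFun h)^[k] t ∈ range h ∧ h^[k] ((Function.invFun h)^[k] t) = t := by
  induction k with
  | zero => exact ⟨ht, htr, rfl⟩
  | succ k ih =>
    obtain ⟨h1, h2, h3⟩ := ih
    rw [Function.iterate_succ_apply' (Function.invFun h)]
    have h4 : h (Function.invFun h ((Function.invFun h)^[k] t)) = (Function.invFun h)^[k] t :=
      Function.invFun_eq h2
    have h5 : ρ (Function.invFun h ((Function.invFun h)^[k] t)) = t := by
      rw [← hρ, h4, h1]
    refine ⟨h5, ?_, ?_⟩
    · by_contra hc
      rw [hρ2 _ hc] at h5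
      rw [h5] at hc
      exact hc htr
    · rw [Function.iterate_succ_apply, h4, h3]

theorem SS_rho (hρ : ∀ x, ρ (h x) = ρ x) (hρ2 : ∀ x, x ∉ range h → ρ x = x) (e : EE h ρ) (k : ℕ) :
    ρ (SS h e.1 k) = e.1.1 := by
  obtain ⟨⟨t, b⟩, h1, h2, h3⟩ := e
  cases b
  · exact (back hρ hρ2 h1 (h3 rfl) (k+1)).1
  · simp only [SS, if_true]
    rw [rho_iter hρ]; exact h1

theorem SS_ray (hρ : ∀ x, ρ (h x) = ρ x) (hρ2 : ∀ x, x ∉ range h → ρ x = x) (e : EE h ρ) :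
    IsRay h (SS h e.1) := by
  obtain ⟨⟨t, b⟩, h1, h2, h3⟩ := e
  cases b
  · right
    intro k
    simp only [SS, Bool.false_eq_true, if_false]
    rw [Function.iterate_succ_apply' _ (k+1)]
    exact Function.invFun_eq (back hρ hρ2 h1 (h3 rfl) (k+1)).2.1
  · left
    intro k
    simp only [SS, if_true]
    rw [Function.iterate_succ_apply']

theorem SS_inj (hinj : Function.Injective h) (hρ : ∀ x, ρ (h x) = ρ x)
    (hρ2 : ∀ x, x ∉ range h → ρ x = x) (e : EE h ρ) :
    Function.Injective (SS h e.1) := by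
  obtain ⟨⟨t, b⟩, h1, h2, h3⟩ := e
  cases b
  · intro i j hij
    simp only [SS, Bool.false_eq_true, if_false] at hij
    have hi : h^[i+1] ((Function.invFun h)^[i+1] t) = t := (back hρ hρ2 h1 (h3 rfl) (i+1)).2.2
    have hj : h^[j+1] ((Function.invFun h)^[j+1] t) = t := (back hρ hρ2 h1 (h3 rfl) (j+1)).2.2
    have : h^[j+1] t = h^[i+1] t := by
      conv_lhs => rw [← hi]
      conv_rhs => rw [← hj]
      rw [hij, ← Function.iterate_add_apply, ← Function.iterate_add_apply, add_comm]
    have := np hinj h2 this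
    omega
  · intro i j hij
    simp only [SS, if_true] at hij
    exact np hinj h2 hij

theorem SS_disj (hinj : Function.Injective h) (hρ : ∀ x, ρ (h x) = ρ x)
    (hρ2 : ∀ x, x ∉ range h → ρ x = x) (e e' : EE h ρ) (x : ℕ) (hx : x ∈ range (SS h e.1))
    (hx' : x ∈ range (SS h e'.1)) : e = e' := by
  obtain ⟨i, rfl⟩ := hx
  obtain ⟨j, hj⟩ := hx'
  have ht := congrArg ρ hj
  rw [SS_rho hρ hρ2, SS_rho hρ hρ2] at ht
  have aux : ∀ t, ρ t = t → t ∉ Function.periodicPts h → t ∈ range h → ∀ i j,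
      SS h (t, true) i ≠ SS h (t, false) j := by
    intro t h1 h2 h3 i j hij
    simp only [SS, if_true, Bool.false_eq_true, if_false] at hij
    have := congrArg (h^[j+1]) hij
    rw [(back hρ hρ2 h1 h3 (j+1)).2.2, ← Function.iterate_add_apply] at this
    have := np (j := 0) hinj h2 this
    omega
  obtain ⟨⟨t, b⟩, h1, h2, h3⟩ := e
  obtain ⟨⟨t', b'⟩, h1', h2', h3'⟩ := e'
  simp only at ht
  subst ht
  cases b <;> cases b'
  · rfl
  · exact absurd hj (aux _ h1 h2 (h3 rfl) _ _)
  · exact absurd hj.symm (aux _ h1 h2 (h3' rfl) _ _)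
  · rfl

theorem SS_cover (hinj : Function.Injective h)
    (hρ2 : ∀ x, x ∉ range h → ρ x = x) (hρ3 : ∀ x, ρ (ρ x) = ρ x)
    (hρ4 : ∀ x y, ρ x = ρ y → ∃ m n, h^[m] x = h^[n] y) (x : ℕ)
    (hx : ρ x ∉ Function.periodicPts h) :
    (∃ e : EE h ρ, e.1 = (ρ x, true) ∧ x ∈ range (SS h e.1)) ∨
    (∃ e : EE h ρ, e.1 = (ρ x, false) ∧ x ∈ range (SS h e.1)) := by
  obtain ⟨m, n, e⟩ := hρ4 x (ρ x) (hρ3 x).symm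
  rcases le_or_gt m n with hmn | hmn
  · obtain ⟨k, rfl⟩ := Nat.exists_eq_add_of_le hmn
    rw [Function.iterate_add_apply] at e
    have := hinj.iterate m e
    exact Or.inl ⟨⟨(ρ x, true), hρ3 x, hx, by simp⟩, rfl, k, by simp [SS, this.symm]⟩
  · obtain ⟨k, rfl⟩ := Nat.exists_eq_add_of_lt hmn
    rw [add_assoc, Function.iterate_add_apply] at e
    have := hinj.iterate n e
    refine Or.inr ⟨⟨(ρ x, false), hρ3 x, hx, fun _ => ⟨h^[k] x, ?_⟩⟩, rfl, k, ?_⟩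
    · rw [← this, Function.iterate_succ_apply']
    · simp only [SS, Bool.false_eq_true, if_false]
      rw [← this]
      exact (Function.leftInverse_invFun hinj).iterate (k+1) x

theorem per_finite (hinj : Function.Injective h) (hρ3 : ∀ x, ρ (ρ x) = ρ x)
    (hρ4 : ∀ x y, ρ x = ρ y → ∃ m n, h^[m] x = h^[n] y) (t : ℕ)
    (ht : t ∈ Function.periodicPts h) : (ρ ⁻¹' {t}).Finite := by
  obtain ⟨p, hp, hpt⟩ := ht
  have hf : ((fun k => h^[k] t) '' {k | k < p}).Finite := (Set.finite_lt_nat p).image _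
  refine hf.subset ?_
  intro x hx
  have hx : ρ x = t := hx
  obtain ⟨m, n, e⟩ := hρ4 x (ρ x) (hρ3 x).symm
  rw [hx] at e
  have e2 : h^[n] t = h^[m + (m * (p - 1) + n)] t := by
    have : m + (m * (p - 1) + n) = n + p * m := by
      obtain ⟨q, rfl⟩ := Nat.exists_eq_add_of_lt hp
      simp; ring
    rw [this, Function.iterate_add_apply, (hpt.mul_const m).eq]
  rw [e2, Function.iterate_add_apply] at e
  have := hinj.iterate m e
  rw [← hpt.iterate_mod_apply] at this
  exact ⟨_, Nat.mod_lt _ hp, this.symm⟩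

theorem comp_eq (hinj : Function.Injective h) (hρ : ∀ x, ρ (h x) = ρ x)
    (hρ2 : ∀ x, x ∉ range h → ρ x = x) (hρ3 : ∀ x, ρ (ρ x) = ρ x)
    (hρ4 : ∀ x y, ρ x = ρ y → ∃ m n, h^[m] x = h^[n] y) {α : PFin → PFin}
    (hα : ∀ A, α (pfinMk A) = pfinMk A ↔ (Cr h A).Finite) (c : PFin) (hc : IsComponent α c) :
    ∃ e : EE h ρ, c = pfinMk (range (SS h e.1)) := by
  obtain ⟨D, rfl⟩ := pf_surj c
  have hDi : D.Infinite := fun hf => hc.2.1 (pf_eq_bot.2 hf)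
  have hfin := comp_finite hρ hα hc
  have : ∃ e : EE h ρ, (range (SS h e.1) ∩ D).Infinite := by
    by_contra! hcon
    apply hDi
    have : D ⊆ ⋃ t ∈ ρ '' D, (D ∩ ρ ⁻¹' {t}) := by
      intro x hx
      simp only [Set.mem_iUnion]
      exact ⟨ρ x, ⟨x, hx, rfl⟩, hx, rfl⟩
    refine (hfin.biUnion fun t ht => ?_).subset this
    by_cases hp : t ∈ Function.periodicPts h
    · exact (per_finite hinj hρ3 hρ4 t hp).subset Set.inter_subset_right
    · have hb : ∀ b, {x | x ∈ D ∧ ∃ e : EE h ρ, e.1 = (t, b) ∧ x ∈ range (SS h e.1)}.Finite := by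
        intro b
        by_cases hex : ∃ e : EE h ρ, e.1 = (t, b)
        · obtain ⟨e, he⟩ := hex
          refine (hcon e).subset ?_
          rintro x ⟨hx, e', he', hx'⟩
          rw [he', ← he] at hx'
          exact ⟨hx', hx⟩
        · convert Set.finite_empty
          ext x
          simp only [Set.mem_ofPred_eq, Set.mem_empty_iff_false, iff_false]
          rintro ⟨_, e, he, _⟩
          exact hex ⟨e, he⟩
      refine ((hb true).union (hb false)).subset ?_
      rintro x ⟨hx, hxt⟩
      have hxt : ρ x = t := hxt
      rcases SS_cover hinj hρ2 hρ3 hρ4 x (by rw [hxt]; exact hp) with h' | h'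
      · left; rw [hxt] at h'; exact ⟨hx, h'⟩
      · right; rw [hxt] at h'; exact ⟨hx, h'⟩
  obtain ⟨e, he⟩ := this
  refine ⟨e, ?_⟩
  have hr := SS_ray hρ hρ2 e
  have hle : pfinMk (range (SS h e.1)) ≤ pfinMk D := by
    rw [pf_le]
    rcases ray_dich (SS_inj hinj hρ hρ2 e) hr ((hα D).1 hc.1) with h' | h'
    · exact h'
    · exact absurd h' he
  by_contra hne
  refine hc.2.2 _ ?_ (lt_of_le_of_ne hle (Ne.symm hne)) ((hα _).2 (ray_fixed hinj hr))
  rw [bot_lt_iff_ne_bot, Ne, pf_eq_bot]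
  exact Set.infinite_range_of_injective (SS_inj hinj hρ hρ2 e)

open Classical in
noncomputable def tau (e : EE h ρ) : EE h ρ :=
  if ht : e.1.1 ∈ range h then ⟨(e.1.1, !e.1.2), e.2.1, e.2.2.1, fun _ => ht⟩ else e

theorem tau_fst (e : EE h ρ) : (tau e).1.1 = e.1.1 := by
  unfold tau; split <;> rfl

theorem tau_tau (e : EE h ρ) : tau (tau e) = e := by
  by_cases ht : e.1.1 ∈ range h
  · apply Subtype.ext
    simp [tau, ht]
  · simp [tau, ht]

theorem tau_fix (e : EE h ρ) : tau e = e ↔ e.1.1 ∉ range h := by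
  by_cases ht : e.1.1 ∈ range h
  · simp only [ht, not_true_eq_false, iff_false]
    intro he
    have := congrArg (fun e => e.1.2) he
    simp [tau, ht] at this
  · simp [tau, ht]

theorem notper {r : ℕ} (hr : r ∉ range h) : r ∉ Function.periodicPts h := by
  rintro ⟨p, hp, hpt⟩
  obtain ⟨q, rfl⟩ := Nat.exists_eq_add_of_lt hp
  apply hr
  have := hpt.eq
  rw [Function.iterate_succ_apply'] at this
  exact ⟨_, this⟩

theorem snd_true (e : EE h ρ) (he : e.1.1 ∉ range h) : e.1.2 = true := by
  by_contra hb
  exact he (e.2.2.2 (by simpa using hb))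

def fixEquiv (hρ2 : ∀ x, x ∉ range h → ρ x = x) :
    {e : EE h ρ // tau e = e} ≃ ((range h)ᶜ : Set ℕ) where
  toFun e := ⟨e.1.1.1, (tau_fix e.1).1 e.2⟩
  invFun r := ⟨⟨(r.1, true), hρ2 _ r.2, notper r.2, by simp⟩, (tau_fix _).2 r.2⟩
  left_inv e := by
    apply Subtype.ext; apply Subtype.ext
    exact Prod.ext rfl (snd_true e.1 ((tau_fix e.1).1 e.2)).symm
  right_inv r := rfl

theorem no_cross (hρ : ∀ x, ρ (h x) = ρ x)
    (hρ4 : ∀ x y, ρ x = ρ y → ∃ m n, h^[m] x = h^[n] y) {D : Set ℕ} {t : ℕ}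
    (ht : ∀ x, ρ x = t → x ∉ Cr h D) (y z : ℕ) (hy : ρ y = t) (hz : ρ z = t) :
    y ∈ D ↔ z ∈ D := by
  have aux : ∀ y, ρ y = t → ∀ k, (h^[k] y ∈ D ↔ y ∈ D) := by
    intro y hy k
    induction k with
    | zero => rfl
    | succ k ih =>
      rw [← ih, Function.iterate_succ_apply']
      have := ht (h^[k] y) (by rw [rho_iter hρ, hy])
      simp only [Cr, Set.mem_ofPred_eq, not_not] at this
      exact this.symm
  obtain ⟨m, n, e⟩ := hρ4 y z (hy.trans hz.symm)
  rw [← aux y hy m, e, aux z hz n]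

theorem inv_exists (X : Type) [Finite X] (hev : Even (Nat.card X)) :
    ∃ s : X → X, (∀ r, s (s r) = r) ∧ ∀ r, s r ≠ r := by
  let q := Finite.equivFin X
  refine ⟨fun r => q.symm (Fin.rev (q r)), fun r => by simp, ?_⟩
  intro r hr
  have : Fin.rev (q r) = q r := by
    have := congrArg q hr
    simpa using this
  have := congrArg Fin.val this
  rw [Fin.val_rev] at this
  have hlt := (q r).2
  obtain ⟨m, hm⟩ := hev
  omega

theorem core (hinj : Function.Injective h) (hfin : (range h)ᶜ.Finite) {α : PFin → PFin}
    (hα : ∀ A, α (pfinMk A) = pfinMk A ↔ (Cr h A).Finite) :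
    PropertyStar α ↔ Even (Nat.card ((range h)ᶜ : Set ℕ)) := by
  obtain ⟨ρ, hρ, hρ2, hρ3, hρ4⟩ := rho_exists h hinj
  rw [star_iff α (fun e : EE h ρ => pfinMk (range (SS h e.1))) ?_
    (fun e => ray_component hinj (SS_inj hinj hρ hρ2 e) (SS_ray hρ hρ2 e) hα)
    (comp_eq hinj hρ hρ2 hρ3 hρ4 hα)]
  · have hff : Finite ((range h)ᶜ : Set ℕ) := hfin
    constructor
    · rintro ⟨σ, hσ, hσ', hd⟩
      rw [← Nat.card_congr (fixEquiv (ρ := ρ) hρ2)]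
      refine comb2 σ tau hσ tau_tau hσ' (comb σ tau hσ tau_tau ?_ ?_)
      · exact (Finite.of_equiv _ (fixEquiv (ρ := ρ) hρ2).symm : Finite {e : EE h ρ // tau e = e})
      · intro A hA
        obtain ⟨d, hd1, hd2, hd3⟩ := hd A hA
        obtain ⟨D, rfl⟩ := pf_surj d
        rw [hα] at hd3
        have hpre : ((fun e : EE h ρ => e.1) ⁻¹' ((ρ '' Cr h D) ×ˢ univ)).Finite :=
          ((hd3.image ρ).prod Set.finite_univ).preimage Subtype.val_injective.injOn
        refine hpre.subset ?_
        rintro e ⟨he, he'⟩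
        refine ⟨?_, trivial⟩
        have k1 := pf_le.1 (hd1 e he)
        have k2 := hd2 _ he'
        rw [pf_inf, pf_eq_bot] at k2
        have i1 := Set.infinite_range_of_injective (SS_inj hinj hρ hρ2 e)
        have i2 := Set.infinite_range_of_injective (SS_inj hinj hρ hρ2 (tau e))
        obtain ⟨_, ⟨i, rfl⟩, hy⟩ := (i1.sdiff k1).nonempty
        obtain ⟨_, ⟨j, rfl⟩, hz⟩ := (i2.sdiff k2).nonempty
        by_contra hcon
        have := no_cross hρ hρ4 (D := D) (t := e.1.1) (fun x hx hxc => hcon ⟨x, hxc, hx⟩)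
          (SS h e.1 i) (SS h (tau e).1 j) (SS_rho hρ hρ2 _ _)
          ((SS_rho hρ hρ2 _ _).trans (tau_fst e))
        refine hz ⟨⟨j, rfl⟩, this.1 ?_⟩
        by_contra hn
        exact hy ⟨⟨i, rfl⟩, hn⟩
    · intro hev
      classical
      obtain ⟨sr, sr1, sr2⟩ : ∃ sr : {r // r ∉ range h} → {r // r ∉ range h},
          (∀ r, sr (sr r) = r) ∧ ∀ r, sr r ≠ r := inv_exists ((range h)ᶜ : Set ℕ) hev
      let σ : EE h ρ → EE h ρ := fun e =>
        if ht : e.1.1 ∈ range h then tau e else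
          ⟨((sr ⟨e.1.1, ht⟩ : ℕ), true), hρ2 _ (sr ⟨e.1.1, ht⟩).2, notper (sr ⟨e.1.1, ht⟩).2, by simp⟩
      have σ1 : ∀ e, e.1.1 ∈ range h → σ e = tau e := fun e he => by simp only [σ, dif_pos he]
      have σ2 : ∀ e (he : e.1.1 ∉ range h), (σ e).1 = ((sr ⟨e.1.1, he⟩ : ℕ), true) :=
        fun e he => by simp only [σ, dif_neg he]
      refine ⟨σ, ?_, ?_, ?_⟩
      · intro e
        by_cases ht : e.1.1 ∈ range h
        · rw [σ1 e ht, σ1 _ (by rw [tau_fst]; exact ht), tau_tau]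
        · apply Subtype.ext
          have h2 : (σ e).1.1 ∉ range h := by rw [σ2 e ht]; exact (sr ⟨e.1.1, ht⟩).2
          rw [σ2 _ h2]
          have : (⟨(σ e).1.1, h2⟩ : {r // r ∉ range h}) = sr ⟨e.1.1, ht⟩ :=
            Subtype.ext (congrArg Prod.fst (σ2 e ht))
          rw [this, sr1]
          exact Prod.ext rfl (snd_true e ht).symm
      · intro e he
        by_cases ht : e.1.1 ∈ range h
        · rw [σ1 e ht, tau_fix] at he
          exact he ht
        · have := congrArg (fun e => e.1.1) he
          simp only [σ2 e ht] at this
          exact sr2 ⟨e.1.1, ht⟩ (Subtype.ext this)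
      · intro A hA
        refine ⟨pfinMk (ρ ⁻¹' {t | ∃ e ∈ A, e.1.1 = t}), ?_, ?_, ?_⟩
        · intro e he
          rw [pf_le]
          convert Set.finite_empty
          ext x
          simp only [Set.mem_empty_iff_false, iff_false]
          rintro ⟨⟨k, rfl⟩, hx⟩
          exact hx ⟨e, he, (SS_rho hρ hρ2 e k).symm⟩
        · intro e he
          rw [pf_inf, pf_eq_bot]
          convert Set.finite_empty
          ext x
          simp only [Set.mem_empty_iff_false, iff_false]
          rintro ⟨⟨k, rfl⟩, e', he', hx⟩
          rw [SS_rho hρ hρ2] at hx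
          by_cases hb : e'.1.2 = e.1.2
          · apply he
            have : e' = e := Subtype.ext (Prod.ext hx hb)
            rwa [← this]
          · have ht : e'.1.1 ∈ range h := by
              by_contra ht
              exact hb ((snd_true e' ht).trans (snd_true e (hx ▸ ht)).symm)
            apply he
            have hs := hA e' he'
            rw [σ1 e' ht] at hs
            have : tau e' = e := by
              refine Subtype.ext (Prod.ext ((tau_fst e').trans hx) ?_)
              simp only [tau, dif_pos ht]
              revert hb
              cases e'.1.2 <;> cases e.1.2 <;> simp
            rwa [← this]
        · rw [hα]
          convert Set.finite_empty
          ext x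
          simp [Cr, hρ]
  · intro e e' hee
    have := (pf_eq.1 hee).1
    have i1 := Set.infinite_range_of_injective (SS_inj hinj hρ hρ2 e)
    obtain ⟨x, hx, hx'⟩ := (i1.sdiff this).nonempty
    refine SS_disj hinj hρ hρ2 e e' x hx ?_
    by_contra hn
    exact hx' ⟨hx, hn⟩

end dyn

namespace AlmostPerm

def cr (f : AlmostPerm) (A : Set ℕ) : Set ℕ := {x | x ∈ f.dom ∧ ¬ (x ∈ A ↔ f.toFun x ∈ A)}

theorem fixed_iff (f : AlmostPerm) (A : Set ℕ) :
    pfinMk (f.image A) = pfinMk A ↔ (f.cr A).Finite := by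
  rw [pf_eq]
  constructor
  · rintro ⟨h1, h2⟩
    refine Set.Finite.of_finite_image ((h1.union h2).subset ?_)
      (f.injOn.mono (fun x hx => hx.1) : Set.InjOn f.toFun (f.cr A))
    rintro _ ⟨x, ⟨hx, hxc⟩, rfl⟩
    by_cases hxA : x ∈ A
    · left
      exact ⟨⟨x, ⟨hxA, hx⟩, rfl⟩, fun h => hxc ⟨fun _ => h, fun _ => hxA⟩⟩
    · right
      refine ⟨?_, ?_⟩
      · by_contra hn
        exact hxc ⟨fun h => absurd h hxA, fun h => absurd h hn⟩
      · rintro ⟨y, ⟨hyA, hy⟩, hxy⟩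
        rw [f.injOn hy hx hxy] at hyA
        exact hxA hyA
  · intro hf
    refine ⟨(hf.image f.toFun).subset ?_, ((hf.image f.toFun).union f.cofinite_ran).subset ?_⟩
    · rintro _ ⟨⟨x, ⟨hxA, hx⟩, rfl⟩, hn⟩
      exact ⟨x, ⟨hx, fun h => hn (h.1 hxA)⟩, rfl⟩
    · rintro y ⟨hyA, hn⟩
      by_cases hy : y ∈ f.toFun '' f.dom
      · left
        obtain ⟨x, hx, rfl⟩ := hy
        exact ⟨x, ⟨hx, fun h => hn ⟨x, ⟨h.2 hyA, hx⟩, rfl⟩⟩, rfl⟩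
      · exact Or.inr hy

theorem aux (f : AlmostPerm) (α : PFin → PFin)
    (hα : ∀ A, α (pfinMk A) = pfinMk A ↔ (f.cr A).Finite)
    (hle : Nat.card ↥(f.domᶜ) ≤ Nat.card ↥(f.ranᶜ)) :
    PropertyStar α ↔ f.index % 2 = 0 := by
  classical
  have hfd : Finite ↥(f.domᶜ) := f.cofinite_dom
  have hfr : Finite ↥(f.ranᶜ) := f.cofinite_ran
  have : ∃ i : ↥(f.domᶜ) → ↥(f.ranᶜ), Function.Injective i := by
    have := Fintype.ofFinite ↥(f.domᶜ)
    have := Fintype.ofFinite ↥(f.ranᶜ)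
    rw [Nat.card_eq_fintype_card, Nat.card_eq_fintype_card] at hle
    obtain ⟨i⟩ := Function.Embedding.nonempty_of_card_le hle
    exact ⟨i, i.injective⟩
  obtain ⟨i, hi⟩ := this
  let h : ℕ → ℕ := fun x => if hx : x ∈ f.dom then f.toFun x else (i ⟨x, hx⟩ : ℕ)
  have hd : ∀ x, x ∈ f.dom → h x = f.toFun x := fun x hx => by simp only [h, dif_pos hx]
  have hn : ∀ x (hx : x ∉ f.dom), h x = (i ⟨x, hx⟩ : ℕ) := fun x hx => by simp only [h, dif_neg hx]
  have hmix : ∀ x y, x ∈ f.dom → y ∉ f.dom → h x ≠ h y := by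
    intro x y hx hy hxy
    rw [hd x hx, hn y hy] at hxy
    exact (i ⟨y, hy⟩).2 ⟨x, hx, hxy⟩
  have hinj : Function.Injective h := by
    intro x y hxy
    by_cases hx : x ∈ f.dom <;> by_cases hy : y ∈ f.dom
    · rw [hd x hx, hd y hy] at hxy
      exact f.injOn hx hy hxy
    · exact absurd hxy (hmix x y hx hy)
    · exact absurd hxy.symm (hmix y x hy hx)
    · rw [hn x hx, hn y hy] at hxy
      exact congrArg Subtype.val (hi (Subtype.ext hxy))
  have hset : (range h)ᶜ = f.ranᶜ \ range (fun x => (i x : ℕ)) := by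
    ext y
    simp only [Set.mem_compl_iff, Set.mem_sdiff]
    constructor
    · intro hy
      refine ⟨?_, ?_⟩
      · rintro ⟨x, hx, rfl⟩
        exact hy ⟨x, hd x hx⟩
      · rintro ⟨x, rfl⟩
        exact hy ⟨x, hn x.1 x.2⟩
    · rintro ⟨h1, h2⟩ ⟨x, rfl⟩
      by_cases hx : x ∈ f.dom
      · exact h1 ⟨x, hx, (hd x hx).symm⟩
      · exact h2 ⟨⟨x, hx⟩, (hn x hx).symm⟩
  have hsub : range (fun x => (i x : ℕ)) ⊆ f.ranᶜ := by
    rintro _ ⟨x, rfl⟩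
    exact (i x).2
  have hcard : Nat.card ((range h)ᶜ : Set ℕ) + Nat.card ↥(f.domᶜ) = Nat.card ↥(f.ranᶜ) := by
    have h1 := Set.ncard_sdiff_add_ncard_of_subset hsub f.cofinite_ran
    rw [← hset] at h1
    have h2 : (range (fun x => (i x : ℕ))).ncard = Nat.card ↥(f.domᶜ) := by
      rw [← Nat.card_coe_set_eq]
      exact Nat.card_range_of_injective (fun a b hab => hi (Subtype.ext hab))
    rw [h2] at h1
    exact h1
  rw [core (h := h) hinj (by rw [hset]; exact f.cofinite_ran.subset Set.sdiff_subset)]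
  · unfold index
    rw [Nat.even_iff]
    omega
  · intro A
    rw [hα]
    constructor
    · intro hf
      refine (hf.union f.cofinite_dom).subset ?_
      intro x hx
      by_cases hxd : x ∈ f.dom
      · left
        refine ⟨hxd, ?_⟩
        rw [← hd x hxd]; exact hx
      · exact Or.inr hxd
    · intro hf
      refine hf.subset ?_
      rintro x ⟨hxd, hx⟩
      rw [← hd x hxd] at hx
      exact hx

noncomputable def inv (f : AlmostPerm) : AlmostPerm where
  dom := f.ran
  toFun := Function.invFunOn f.toFun f.dom
  cofinite_dom := f.cofinite_ran
  injOn := Function.invFunOn_injOn_image _ _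
  cofinite_ran := by
    have : Function.invFunOn f.toFun f.dom '' f.ran = f.dom := f.injOn.invFunOn_image subset_rfl
    rw [this]; exact f.cofinite_dom

theorem inv_ran (f : AlmostPerm) : f.inv.ran = f.dom := f.injOn.invFunOn_image subset_rfl

theorem inv_index (f : AlmostPerm) : f.inv.index = - f.index := by
  unfold index
  rw [inv_ran]
  change (Nat.card ↥(f.ranᶜ) : ℤ) - _ = _
  ring

theorem inv_cr (f : AlmostPerm) (A : Set ℕ) : f.inv.cr A = f.toFun '' f.cr A := by
  have key : ∀ x ∈ f.dom, f.inv.toFun (f.toFun x) = x := fun x hx => f.injOn.leftInvOn_invFunOn hx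
  ext y
  constructor
  · rintro ⟨⟨x, hx, rfl⟩, hc⟩
    rw [key x hx] at hc
    exact ⟨x, ⟨hx, fun h => hc h.symm⟩, rfl⟩
  · rintro ⟨x, ⟨hx, hc⟩, rfl⟩
    refine ⟨⟨x, hx, rfl⟩, ?_⟩
    rw [key x hx]
    exact fun h => hc h.symm

end AlmostPerm

/-- `α_f` satisfies property (*) iff `Index f` is even. -/
theorem propertyStar_iff_index_even (f : AlmostPerm) (α : PFin → PFin)
    (hα : ∀ A : Set ℕ, α (pfinMk A) = pfinMk (f.image A)) :
    PropertyStar α ↔ f.index % 2 = 0 := by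
  have hα' : ∀ A, α (pfinMk A) = pfinMk A ↔ (f.cr A).Finite := fun A => by
    rw [hα, f.fixed_iff]
  rcases le_total (Nat.card ↥(f.domᶜ)) (Nat.card ↥(f.ranᶜ)) with hle | hle
  · exact f.aux α hα' hle
  · rw [f.inv.aux α ?_ ?_, f.inv_index]
    · omega
    · intro A
      rw [hα', f.inv_cr, Set.finite_image_iff (f.injOn.mono (fun x hx => hx.1))]
    · rw [f.inv_ran]; exact hle
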